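/- Let n ≥ 3 and let a = (a_1, …, a_n) ∈ ℤ^n with a_i ≥ 1 for all i. Then the normalized volume of the cosmological polytope of the multicycle C_a is Vol(C_{C_a}) = ∏_{i=1}^n (1 + a_i) 2^{a_i} − ∏_{i=1}^n a_i 2^{a_i}. -/

import Mathlib

open Polynomial Pointwise

/-- The set of vertices (generating points) of the cosmological polytope of the
multigraph with edge-endpoint map `ends : E → Sym2 V`. -/
def cosmoVertices {V E : Type*} [DecidableEq V] [DecidableEq E] (ends : E → Sym2 V) :
    Set ((V ⊕ E) → ℝ) :=
  { x | ∃ (f : E) (i j : V), ends f = s(i, j) ∧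
      (x = Pi.single (Sum.inl i) 1 + Pi.single (Sum.inl j) 1 - Pi.single (Sum.inr f) 1 ∨
       x = Pi.single (Sum.inl i) 1 - Pi.single (Sum.inl j) 1 + Pi.single (Sum.inr f) 1 ∨
       x = -Pi.single (Sum.inl i) 1 + Pi.single (Sum.inl j) 1 + Pi.single (Sum.inr f) 1) }

/-- The cosmological polytope of a multigraph. -/
def cosmoPolytope {V E : Type*} [DecidableEq V] [DecidableEq E] (ends : E → Sym2 V) :
    Set ((V ⊕ E) → ℝ) :=
  convexHull ℝ (cosmoVertices ends)

/-- Number of lattice points of the `t`-th dilate of `P`. -/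
noncomputable def latticePointCount {ι : Type*} (P : Set (ι → ℝ)) (t : ℕ) : ℕ :=
  Set.ncard { x : ι → ℤ | (fun k => (x k : ℝ)) ∈ (t : ℝ) • P }

/-- The Ehrhart series of `P` as a formal power series. -/
noncomputable def ehrhartSeries {ι : Type*} (P : Set (ι → ℝ)) : PowerSeries ℚ :=
  PowerSeries.mk fun t => if t = 0 then 1 else (latticePointCount P t : ℚ)

/-- `h` is the `h^*`-polynomial of the `d`-dimensional lattice polytope `P`:
`Ehr(P; z) = h(z) / (1-z)^(d+1)` as formal power series. -/
def IsHStarPoly {ι : Type*} (P : Set (ι → ℝ)) (d : ℕ) (h : Polynomial ℚ) : Prop :=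
  ehrhartSeries P * (1 - PowerSeries.X) ^ (d + 1) = (h : PowerSeries ℚ)

/-- Adjacency relation of the multigraph given by `ends`. -/
def multigraphAdj {V E : Type*} (ends : E → Sym2 V) (i j : V) : Prop :=
  ∃ f, ends f = s(i, j)

/-- Reachability in the multigraph given by `ends`. -/
def multigraphReach {V E : Type*} (ends : E → Sym2 V) : V → V → Prop :=
  Relation.ReflTransGen (multigraphAdj ends)

/-- The number of connected components of the multigraph given by `ends`. -/
noncomputable def numComponents {V E : Type*} (ends : E → Sym2 V) : ℕ :=
  Nat.card (Quot (multigraphReach ends))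


/-- The endpoint map of the multicycle `C_a` on vertex set `ZMod n`: for each vertex `i`
there are `a i` parallel edges between `i` and `i + 1`. -/
def multicycleEnds (n : ℕ) (a : ZMod n → ℕ) : (Σ i : ZMod n, Fin (a i)) → Sym2 (ZMod n) :=
  fun p => s(p.1, p.1 + 1)

/-- A type with an `ℕ`-valued weight with finite fibres. -/
structure Graded (T : Type*) where
  w : T → ℕ
  fib : ℕ → Finset T
  mem_fib : ∀ t x, x ∈ fib t ↔ w x = t

namespace Graded

noncomputable def gf {T : Type*} (G : Graded T) (f : T → ℚ) : PowerSeries ℚ :=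
  PowerSeries.mk fun t => ∑ x ∈ G.fib t, f x

open Classical in
noncomputable def pi {ι : Type*} [Fintype ι] {T : ι → Type*} (G : ∀ i, Graded (T i)) :
    Graded (∀ i, T i) where
  w x := ∑ i, (G i).w (x i)
  fib t := (Finset.finsuppAntidiag Finset.univ t).biUnion
    (fun l => Fintype.piFinset (fun i => (G i).fib (l i)))
  mem_fib t x := by
    simp only [Finset.mem_biUnion, Finset.mem_finsuppAntidiag, Fintype.mem_piFinset, mem_fib]
    constructor
    · rintro ⟨l, ⟨h1, -⟩, h2⟩
      rw [← h1]
      exact Finset.sum_congr rfl fun i _ => h2 i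
    · intro h
      exact ⟨Finsupp.equivFunOnFinite.symm (fun i => (G i).w (x i)), ⟨by simpa using h, by simp⟩,
        by simp⟩

open Classical in
theorem gf_pi {ι : Type*} [Fintype ι] {T : ι → Type*} (G : ∀ i, Graded (T i))
    (f : ∀ i, T i → ℚ) :
    (pi G).gf (fun x => ∏ i, f i (x i)) = ∏ i, (G i).gf (f i) := by
  ext t
  rw [PowerSeries.coeff_prod]
  simp only [gf, PowerSeries.coeff_mk]
  simp only [Finset.prod_univ_sum]
  simp only [pi]
  rw [Finset.sum_biUnion]
  intro l _ l' _ hne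
  simp only [Function.onFun]
  rw [Finset.disjoint_left]
  intro x hx hx'
  apply hne
  ext i
  simp only [Fintype.mem_piFinset, mem_fib] at hx hx'
  rw [← hx i, ← hx' i]

open Classical in
noncomputable def prod {T U : Type*} (G : Graded T) (H : Graded U) : Graded (T × U) where
  w x := G.w x.1 + H.w x.2
  fib t := (Finset.HasAntidiagonal.antidiagonal t).biUnion (fun k => G.fib k.1 ×ˢ H.fib k.2)
  mem_fib t x := by
    simp only [Finset.mem_biUnion, Finset.HasAntidiagonal.mem_antidiagonal, Finset.mem_product, mem_fib]
    constructor
    · rintro ⟨l, h1, h2, h3⟩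
      rw [← h1, h2, h3]
    · intro h
      exact ⟨(G.w x.1, H.w x.2), h, rfl, rfl⟩

open Classical in
theorem gf_prod {T U : Type*} (G : Graded T) (H : Graded U) (f : T → ℚ) (g : U → ℚ) :
    (prod G H).gf (fun x => f x.1 * g x.2) = G.gf f * H.gf g := by
  ext t
  rw [PowerSeries.coeff_mul]
  simp only [gf, PowerSeries.coeff_mk]
  simp only [Finset.sum_mul_sum, ← Finset.sum_product']
  simp only [prod]
  rw [Finset.sum_biUnion]
  intro l _ l' _ hne
  simp only [Function.onFun]
  rw [Finset.disjoint_left]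
  intro x hx hx'
  apply hne
  simp only [Finset.mem_product, mem_fib] at hx hx'
  ext
  · rw [← hx.1, ← hx'.1]
  · rw [← hx.2, ← hx'.2]

theorem gf_add {T : Type*} (G : Graded T) (f g : T → ℚ) :
    G.gf (fun x => f x + g x) = G.gf f + G.gf g := by
  ext t; simp [gf, Finset.sum_add_distrib]

theorem gf_sub {T : Type*} (G : Graded T) (f g : T → ℚ) :
    G.gf (fun x => f x - g x) = G.gf f - G.gf g := by
  ext t; simp [gf, Finset.sum_sub_distrib]

theorem gf_sum {T J : Type*} (G : Graded T) (s : Finset J) (f : J → T → ℚ) :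
    G.gf (fun x => ∑ j ∈ s, f j x) = ∑ j ∈ s, G.gf (f j) := by
  ext t; simp only [gf, PowerSeries.coeff_mk, map_sum]; rw [Finset.sum_comm]

def int : Graded ℤ where
  w := Int.natAbs
  fib k := {(k : ℤ), -(k : ℤ)}
  mem_fib t x := by
    simp only [Finset.mem_insert, Finset.mem_singleton]
    omega

def nat : Graded ℕ where
  w := id
  fib k := {k}
  mem_fib t x := by simp

theorem gf_nat_one : nat.gf (fun _ => 1) * (1 - PowerSeries.X) = 1 := by
  ext t
  rw [mul_sub, mul_one, map_sub]
  rcases t with _ | t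
  · simp [gf, nat]
  · rw [PowerSeries.coeff_succ_mul_X]
    simp [gf, nat, PowerSeries.coeff_one]

theorem gf_nat_zero : nat.gf (fun p => if p = 0 then 1 else 0) = 1 := by
  ext t
  simp [gf, nat, PowerSeries.coeff_one, eq_comm]

theorem coeff_int (f : ℤ → ℚ) (t : ℕ) : PowerSeries.coeff t (int.gf f) =
    if t = 0 then f 0 else f t + f (-t) := by
  simp only [gf, int, PowerSeries.coeff_mk]
  split_ifs with h
  · simp [h]
  · rw [Finset.sum_pair (by omega)]

theorem gf_int_one : int.gf (fun _ => 1) * (1 - PowerSeries.X) = 1 + PowerSeries.X := by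
  ext t
  rw [mul_sub, mul_one, map_sub]
  rcases t with _ | _ | t
  · simp [coeff_int]
  · rw [PowerSeries.coeff_succ_mul_X]
    simp [coeff_int, PowerSeries.coeff_one]
  · rw [PowerSeries.coeff_succ_mul_X]
    simp [coeff_int, PowerSeries.coeff_one, PowerSeries.coeff_X]

theorem gf_int_pos : int.gf (fun y => 2 * ((y⁺ : ℤ) : ℚ)) * (1 - PowerSeries.X) ^ 2
    = 2 * PowerSeries.X := by
  have key : int.gf (fun y => 2 * ((y⁺ : ℤ) : ℚ)) * (1 - PowerSeries.X)
      = 2 * (PowerSeries.mk (fun _ => 1) - 1) := by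
    have h : ∀ t : ℕ, PowerSeries.coeff t (int.gf (fun y => 2 * ((y⁺ : ℤ) : ℚ))) = 2 * t := by
      intro t
      rw [coeff_int]
      split_ifs with h
      · simp [h]
      · simp
    ext t
    rw [mul_sub, mul_one, map_sub, h, two_mul (PowerSeries.mk _ - 1)]
    rcases t with _ | t
    · simp
    · rw [PowerSeries.coeff_succ_mul_X, h]
      simp [PowerSeries.coeff_one]
      ring
  have h1 : (PowerSeries.mk (fun _ => (1:ℚ))) * (1 - PowerSeries.X) = 1 :=
    PowerSeries.mk_one_mul_one_sub_eq_one ℚ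
  rw [pow_two, ← mul_assoc, key, mul_assoc, sub_mul, h1]
  ring

end Graded

open Graded in
noncomputable def locG (m : ℕ) : Graded ((Fin m → ℤ) × ℕ) := (pi fun _ => int).prod nat

def cp {m : ℕ} (y : Fin m → ℤ) : ℤ := ∑ j, (y j)⁺
def cm {m : ℕ} (y : Fin m → ℤ) : ℤ := ∑ j, (y j)⁻

open Graded in
theorem locG_one (m : ℕ) : (locG m).gf (fun _ => 1) * (1 - PowerSeries.X) ^ (m + 1)
    = (1 + PowerSeries.X) ^ m := by
  have h1 : (locG m).gf (fun _ => 1) = (int.gf (fun _ => 1)) ^ m * nat.gf (fun _ => 1) := by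
    have := gf_prod (pi fun _ : Fin m => int) nat (fun x => ∏ i, (fun _ => 1) (x i)) (fun _ => 1)
    rw [gf_pi (fun _ : Fin m => int) (fun _ _ => 1)] at this
    simpa [locG] using this
  rw [h1, pow_succ, mul_mul_mul_comm, gf_nat_one, ← mul_pow, gf_int_one, mul_one]

open Graded in
theorem locG_B (m : ℕ) : (locG m).gf (fun x => (2 * (cp x.1 : ℚ)) * (if x.2 = 0 then 1 else 0)) *
      (1 - PowerSeries.X) ^ (m + 1)
    = (m : PowerSeries ℚ) * (1 + PowerSeries.X) ^ (m - 1) * (2 * PowerSeries.X) := by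
  have h0 : (fun y : Fin m → ℤ => 2 * (cp y : ℚ)) =
      fun y => ∑ j, ∏ k, (if k = j then 2 * (((y k)⁺ : ℤ) : ℚ) else 1) := by
    ext y
    simp [cp, Finset.mul_sum]
  have h1 := gf_prod (pi fun _ : Fin m => int) nat (fun y => 2 * (cp y : ℚ))
    (fun p => if p = 0 then 1 else 0)
  rw [gf_nat_zero, mul_one, h0, gf_sum] at h1
  unfold locG
  rw [h1, Finset.sum_mul]
  rw [Finset.sum_congr rfl (g := fun _ => (1 + PowerSeries.X) ^ (m - 1) * (2 * PowerSeries.X))]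
  · simp; ring
  intro j _
  rw [gf_pi (fun _ : Fin m => int) (fun k z => if k = j then 2 * (((z)⁺ : ℤ) : ℚ) else 1)]
  rw [← Finset.mul_prod_erase _ _ (Finset.mem_univ j)]
  rw [Finset.prod_congr rfl (g := fun _ => int.gf (fun _ => 1))]
  · simp only [if_true, Finset.prod_const]
    rw [Finset.card_erase_of_mem (Finset.mem_univ j), Finset.card_univ, Fintype.card_fin]
    obtain ⟨k, rfl⟩ : ∃ k, m = k + 1 := ⟨m - 1, by have := j.2; omega⟩
    simp only [Nat.add_sub_cancel]
    rw [← gf_int_pos, ← gf_int_one, mul_pow]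
    ring
  · intro k hk
    simp [Finset.ne_of_mem_erase hk]

theorem flow_max_exists (n : ℕ) [NeZero n] (hn : 2 ≤ n) (c z : ZMod n → ℤ)
    (h : ∃ s : ZMod n → ℤ, ∀ i, -c i ≤ s i ∧ s i ≤ c i ∧ s i ≤ z i + s (i - 1)) :
    ∃ s : ZMod n → ℤ, (∀ i, -c i ≤ s i ∧ s i ≤ c i ∧ s i ≤ z i + s (i - 1)) ∧
      (∀ i, z i + s (i - 1) = s i ∨ s i = c i) ∧ ∃ i, s i = c i := by
  classical
  have hne1 : ∀ i : ZMod n, i - 1 ≠ i := by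
    intro i h
    have h1 : (1 : ZMod n) = 0 := by simpa using h
    have : Fact (1 < n) := ⟨by omega⟩
    exact one_ne_zero h1
  obtain ⟨s0, hs0⟩ := h
  let S := (Fintype.piFinset (fun i => Finset.Icc (-c i) (c i))).filter
    (fun s => ∀ i, s i ≤ z i + s (i - 1))
  have hS : ∀ s, s ∈ S ↔ ∀ i, -c i ≤ s i ∧ s i ≤ c i ∧ s i ≤ z i + s (i - 1) := by
    intro s
    simp only [S, Finset.mem_filter, Fintype.mem_piFinset, Finset.mem_Icc]
    constructor
    · rintro ⟨h1, h2⟩ i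
      exact ⟨(h1 i).1, (h1 i).2, h2 i⟩
    · intro h
      exact ⟨fun i => ⟨(h i).1, (h i).2.1⟩, fun i => (h i).2.2⟩
  obtain ⟨s, hsS, hmax⟩ := S.exists_max_image (fun s => ∑ i, s i) ⟨s0, (hS s0).2 hs0⟩
  have hs := (hS s).1 hsS
  have htight : ∀ i, z i + s (i - 1) = s i ∨ s i = c i := by
    intro i
    by_contra! hcon
    obtain ⟨h1, h2⟩ := hcon
    have h3 : Function.update s i (s i + 1) ∈ S := by
      rw [hS]
      intro k
      have hk := hs k
      have hi := hs i
      by_cases hki : k = i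
      · subst hki
        rw [Function.update_self, Function.update_of_ne (hne1 k)]
        omega
      · rw [Function.update_of_ne hki]
        by_cases hk1 : k - 1 = i
        · rw [hk1, Function.update_self]
          rw [hk1] at hk
          omega
        · rw [Function.update_of_ne hk1]
          exact hk
    have h4 := hmax _ h3
    rw [Finset.sum_update_of_mem (Finset.mem_univ i),
      ← Finset.add_sum_erase Finset.univ s (Finset.mem_univ i), Finset.sdiff_singleton_eq_erase] at h4
    omega
  refine ⟨s, hs, htight, ?_⟩
  by_contra! hcon
  have h3 : (fun i => s i + 1) ∈ S := by
    rw [hS]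
    intro k
    have hk := hs k
    have := hcon k
    omega
  have h4 := hmax _ h3
  simp only [Finset.sum_add_distrib] at h4
  simp at h4
  have := NeZero.pos n
  omega

theorem flow_max_le (n : ℕ) [NeZero n] (c z s s' : ZMod n → ℤ)
    (h2 : ∀ i, z i + s (i - 1) = s i ∨ s i = c i) (h3 : ∃ i, s i = c i)
    (h1' : ∀ i, s' i ≤ c i ∧ s' i ≤ z i + s' (i - 1)) : ∀ i, s' i ≤ s i := by
  obtain ⟨i0, hi0⟩ := h3
  have key : ∀ k : ℕ, s' (i0 + k) ≤ s (i0 + k) := by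
    intro k
    induction k with
    | zero => simp [hi0, (h1' i0).1]
    | succ k ih =>
      have e : i0 + ((k + 1 : ℕ) : ZMod n) - 1 = i0 + k := by push_cast; ring
      have h4 := h2 (i0 + ((k + 1 : ℕ) : ZMod n))
      have h5 := h1' (i0 + ((k + 1 : ℕ) : ZMod n))
      rw [e] at h4 h5
      omega
  intro i
  have := key (i - i0).val
  rwa [ZMod.natCast_zmod_val, add_sub_cancel] at this

section real

variable {n : ℕ} [NeZero n] {a : ZMod n → ℕ}

/-- The vector `r e_i + s e_{i+1} + q e_f`. -/
def evec (f : Σ i : ZMod n, Fin (a i)) (r s q : ℝ) : (ZMod n ⊕ Σ i : ZMod n, Fin (a i)) → ℝ :=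
  Sum.elim (fun k => (if f.1 = k then r else 0) + (if f.1 + 1 = k then s else 0))
    (fun g => if f = g then q else 0)

set_option linter.unusedSectionVars false in
theorem evec_eq (f : Σ i : ZMod n, Fin (a i)) (r s q : ℝ) :
    evec f r s q = r • Pi.single (Sum.inl f.1) 1 +
      s • Pi.single (Sum.inl (f.1 + 1)) 1 + q • Pi.single (Sum.inr f) 1 := by
  ext k
  rcases k with k | g
  · simp [evec, Pi.single_apply, eq_comm]
  · simp [evec, Pi.single_apply, eq_comm]

theorem evec_mem (f : Σ i : ZMod n, Fin (a i)) :
    evec f 1 1 (-1) ∈ cosmoVertices (multicycleEnds n a) ∧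
    evec f 1 (-1) 1 ∈ cosmoVertices (multicycleEnds n a) ∧
    evec f (-1) 1 1 ∈ cosmoVertices (multicycleEnds n a) := by
  refine ⟨⟨f, f.1, f.1 + 1, rfl, Or.inl ?_⟩, ⟨f, f.1, f.1 + 1, rfl, Or.inr (Or.inl ?_)⟩,
    ⟨f, f.1, f.1 + 1, rfl, Or.inr (Or.inr ?_)⟩⟩
  all_goals
    rw [evec_eq]
    module

theorem eq_evec {x} (hx : x ∈ cosmoVertices (multicycleEnds n a)) :
    ∃ (f : Σ i : ZMod n, Fin (a i)) (r s q : ℝ), x = evec f r s q ∧ 0 ≤ r + s ∧ 0 ≤ r + q ∧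
      0 ≤ s + q ∧ r + s + q = 1 := by
  obtain ⟨f, i, j, he, hx⟩ := hx
  simp only [multicycleEnds] at he
  rw [Sym2.eq_iff] at he
  rcases he with ⟨rfl, rfl⟩ | ⟨rfl, rfl⟩ <;> rcases hx with rfl | rfl | rfl
  · exact ⟨f, 1, 1, -1, by rw [evec_eq]; module, by norm_num, by norm_num, by norm_num, by norm_num⟩
  · exact ⟨f, 1, -1, 1, by rw [evec_eq]; module, by norm_num, by norm_num, by norm_num, by norm_num⟩
  · exact ⟨f, -1, 1, 1, by rw [evec_eq]; module, by norm_num, by norm_num, by norm_num, by norm_num⟩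
  · exact ⟨f, 1, 1, -1, by rw [evec_eq]; module, by norm_num, by norm_num, by norm_num, by norm_num⟩
  · exact ⟨f, -1, 1, 1, by rw [evec_eq]; module, by norm_num, by norm_num, by norm_num, by norm_num⟩
  · exact ⟨f, 1, -1, 1, by rw [evec_eq]; module, by norm_num, by norm_num, by norm_num, by norm_num⟩

/-- Explicit description of the cone over the cosmological polytope at height `t`. -/
def InCone (t : ℝ) (x : (ZMod n ⊕ Σ i : ZMod n, Fin (a i)) → ℝ) : Prop :=
  ∃ u v : (Σ i : ZMod n, Fin (a i)) → ℝ,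
    (∀ f, 0 ≤ u f + v f ∧ 0 ≤ u f + x (Sum.inr f) ∧ 0 ≤ v f + x (Sum.inr f)) ∧
    (∀ i, x (Sum.inl i) = ∑ j, u ⟨i, j⟩ + ∑ j, v ⟨i - 1, j⟩) ∧ ∑ k, x k = t

theorem InCone.add {t t' : ℝ} {x x' : (ZMod n ⊕ Σ i : ZMod n, Fin (a i)) → ℝ}
    (h : InCone t x) (h' : InCone t' x') : InCone (t + t') (x + x') := by
  obtain ⟨u, v, h1, h2, h3⟩ := h
  obtain ⟨u', v', h1', h2', h3'⟩ := h'
  refine ⟨u + u', v + v', fun f => ?_, fun i => ?_, ?_⟩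
  · have := h1 f
    have := h1' f
    simp only [Pi.add_apply]
    refine ⟨?_, ?_, ?_⟩ <;> linarith
  · simp only [Pi.add_apply, Finset.sum_add_distrib, h2, h2']
    ring
  · simp only [Pi.add_apply, Finset.sum_add_distrib, h3, h3']

theorem InCone.smul {t b : ℝ} (hb : 0 ≤ b) {x : (ZMod n ⊕ Σ i : ZMod n, Fin (a i)) → ℝ}
    (h : InCone t x) : InCone (b * t) (b • x) := by
  obtain ⟨u, v, h1, h2, h3⟩ := h
  refine ⟨b • u, b • v, fun f => ?_, fun i => ?_, ?_⟩
  · obtain ⟨p, q, r⟩ := h1 f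
    simp only [Pi.smul_apply, smul_eq_mul, ← mul_add]
    exact ⟨mul_nonneg hb p, mul_nonneg hb q, mul_nonneg hb r⟩
  · simp only [Pi.smul_apply, smul_eq_mul, ← Finset.mul_sum, h2]
    ring
  · simp only [Pi.smul_apply, smul_eq_mul, ← Finset.mul_sum, h3]

theorem sum_evec_inl (u v y : (Σ i : ZMod n, Fin (a i)) → ℝ) (i : ZMod n) :
    ∑ f, evec f (u f) (v f) (y f) (Sum.inl i) = ∑ j, u ⟨i, j⟩ + ∑ j, v ⟨i - 1, j⟩ := by
  simp only [evec, Sum.elim_inl, Finset.sum_add_distrib, Fintype.sum_sigma]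
  congr 1
  · rw [Finset.sum_eq_single i]
    · simp
    · intro b _ hb
      simp [hb]
    · simp
  · rw [Finset.sum_eq_single (i - 1)]
    · simp
    · intro b _ hb
      have : b + 1 ≠ i := by
        rintro rfl
        simp at hb
      simp [this]
    · simp

theorem sum_evec_inr (u v y : (Σ i : ZMod n, Fin (a i)) → ℝ) (g) :
    ∑ f, evec f (u f) (v f) (y f) (Sum.inr g) = y g := by
  simp [evec]

theorem sum_cone (x : (ZMod n ⊕ Σ i : ZMod n, Fin (a i)) → ℝ)
    (u v : (Σ i : ZMod n, Fin (a i)) → ℝ)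
    (h : ∀ i, x (Sum.inl i) = ∑ j, u ⟨i, j⟩ + ∑ j, v ⟨i - 1, j⟩) :
    ∑ k, x k = ∑ f, (u f + v f + x (Sum.inr f)) := by
  rw [Fintype.sum_sum_type]
  simp only [h, Finset.sum_add_distrib, Fintype.sum_sigma]
  congr 2
  exact (Equiv.subRight (1 : ZMod n)).sum_comp (fun i => ∑ j, v ⟨i, j⟩)

theorem inCone_of_mem {x} (hx : x ∈ cosmoPolytope (multicycleEnds n a)) : InCone 1 x := by
  classical
  have : cosmoPolytope (multicycleEnds n a) ⊆ {x | InCone 1 x} := by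
    apply convexHull_min
    · intro x hx
      obtain ⟨f, r, s, q, rfl, h1, h2, h3, h4⟩ := eq_evec hx
      have e1 : ∀ i : ZMod n, evec f r s q (Sum.inl i) =
          ∑ j, (Pi.single f r : (Σ i : ZMod n, Fin (a i)) → ℝ) ⟨i, j⟩ +
          ∑ j, (Pi.single f s : (Σ i : ZMod n, Fin (a i)) → ℝ) ⟨i - 1, j⟩ := by
        intro i
        rw [← sum_evec_inl (Pi.single f r) (Pi.single f s) (Pi.single f q) i]
        rw [Finset.sum_eq_single f]
        · simp
        · intro b _ hb
          simp [evec, hb]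
        · simp
      refine ⟨Pi.single f r, Pi.single f s, ?_, e1, ?_⟩
      · intro g
        by_cases hg : g = f
        · subst hg
          simp [evec, h1, h2, h3]
        · simp [evec, hg, Ne.symm hg]
      · rw [sum_cone _ _ _ e1, Finset.sum_eq_single f]
        · simp [evec, h4]
        · intro b _ hb
          simp [evec, hb, Ne.symm hb]
        · simp
    · intro x hx y hy b c hb hc hbc
      have := (InCone.smul hb hx).add (InCone.smul hc hy)
      rw [mul_one, mul_one, hbc] at this
      exact this
  exact this hx

theorem mem_of_inCone {x} (hx : InCone 1 x) : x ∈ cosmoPolytope (multicycleEnds n a) := by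
  obtain ⟨u, v, h1, h2, h3⟩ := hx
  rw [sum_cone x u v h2] at h3
  have hconv := convex_convexHull ℝ (cosmoVertices (multicycleEnds n a))
  have := hconv.sum_mem (t := (Finset.univ : Finset ((Σ i : ZMod n, Fin (a i)) × Fin 3)))
    (w := fun p => ![(u p.1 + v p.1) / 2, (u p.1 + x (Sum.inr p.1)) / 2,
      (v p.1 + x (Sum.inr p.1)) / 2] p.2)
    (z := fun p => ![evec p.1 1 1 (-1), evec p.1 1 (-1) 1, evec p.1 (-1) 1 1] p.2)
    (by
      rintro ⟨f, k⟩ -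
      obtain ⟨p, q, r⟩ := h1 f
      fin_cases k <;> simp <;> linarith)
    (by
      rw [Fintype.sum_prod_type, ← h3]
      refine Finset.sum_congr rfl fun f _ => ?_
      simp [Fin.sum_univ_three]
      ring)
    (by
      rintro ⟨f, k⟩ -
      obtain ⟨p, q, r⟩ := evec_mem f
      apply subset_convexHull
      fin_cases k <;> simpa)
  change x ∈ convexHull ℝ (cosmoVertices (multicycleEnds n a))
  convert this using 1
  rw [Fintype.sum_prod_type]
  have e : ∀ f, ∑ y : Fin 3, (![(u f + v f) / 2, (u f + x (Sum.inr f)) / 2,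
      (v f + x (Sum.inr f)) / 2] : Fin 3 → ℝ) y •
      (![evec f 1 1 (-1), evec f 1 (-1) 1, evec f (-1) 1 1] : Fin 3 → _) y =
      evec f (u f) (v f) (x (Sum.inr f)) := by
    intro f
    ext k
    rcases k with k | k
    · simp [Fin.sum_univ_three, evec]
      split_ifs <;> ring
    · simp [Fin.sum_univ_three, evec]
      split_ifs <;> ring
  simp only [e]
  ext k
  rw [Finset.sum_apply]
  rcases k with k | k
  · rw [h2, sum_evec_inl]
  · rw [sum_evec_inr u v (fun f => x (Sum.inr f))]

theorem mem_smul_iff (t : ℕ) (ht : t ≠ 0) (x : (ZMod n ⊕ Σ i : ZMod n, Fin (a i)) → ℝ) :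
    x ∈ (t : ℝ) • cosmoPolytope (multicycleEnds n a) ↔ InCone t x := by
  have ht' : (t : ℝ) ≠ 0 := by exact_mod_cast ht
  constructor
  · rintro ⟨y, hy, rfl⟩
    have := InCone.smul (Nat.cast_nonneg t) (inCone_of_mem hy)
    rwa [mul_one] at this
  · intro h
    rw [Set.mem_smul_set_iff_inv_smul_mem₀ ht']
    apply mem_of_inCone
    have := InCone.smul (inv_nonneg.2 (Nat.cast_nonneg t)) h
    rwa [inv_mul_cancel₀ ht'] at this

end real

section lattice

variable {n : ℕ} [NeZero n] {a : ZMod n → ℕ}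

/-- Total capacity of bundle `i`. -/
def capP (y : (Σ i : ZMod n, Fin (a i)) → ℤ) (i : ZMod n) : ℤ := cp (fun j => y ⟨i, j⟩)

/-- Total consumption of bundle `i`. -/
def capM (y : (Σ i : ZMod n, Fin (a i)) → ℤ) (i : ZMod n) : ℤ := cm (fun j => y ⟨i, j⟩)

def Feas (y : (Σ i : ZMod n, Fin (a i)) → ℤ) (x s : ZMod n → ℤ) : Prop :=
  ∀ i, -capP y i ≤ s i ∧ s i ≤ capP y i ∧ s i ≤ (x i - capM y i - capM y (i - 1)) + s (i - 1)

theorem edge_split (u v : ℝ) (y : ℤ) (h1 : 0 ≤ u + v) (h2 : 0 ≤ u + y) (h3 : 0 ≤ v + y) :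
    ∃ σ : ℝ, -((y⁺ : ℤ) : ℝ) ≤ σ ∧ σ ≤ ((y⁺ : ℤ) : ℝ) ∧ ((y⁻ : ℤ) : ℝ) + σ ≤ u ∧
      ((y⁻ : ℤ) : ℝ) - σ ≤ v := by
  rcases le_total 0 y with hy | hy
  · have hy' : (0 : ℝ) ≤ y := by exact_mod_cast hy
    rw [posPart_eq_self.2 hy, negPart_eq_zero.2 hy]
    refine ⟨min u y, ?_, min_le_right _ _, by simp, ?_⟩
    · rw [le_min_iff]
      constructor <;> linarith
    · rcases min_choice u (y : ℝ) with h | h <;> rw [h] <;> push_cast <;> linarith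
  · rw [posPart_eq_zero.2 hy, negPart_eq_neg.2 hy]
    refine ⟨0, by simp, by simp, ?_, ?_⟩ <;> push_cast <;> linarith

theorem inCone_feas {t : ℕ} {x : (ZMod n ⊕ Σ i : ZMod n, Fin (a i)) → ℤ}
    (h : InCone (t : ℝ) (fun k => (x k : ℝ))) :
    ∃ s, Feas (fun f => x (Sum.inr f)) (fun i => x (Sum.inl i)) s := by
  obtain ⟨u, v, h1, h2, -⟩ := h
  have hs := fun f => edge_split (u f) (v f) (x (Sum.inr f)) (h1 f).1 (h1 f).2.1 (h1 f).2.2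
  choose σ hσ1 hσ2 hσ3 hσ4 using hs
  refine ⟨fun i => ⌊∑ j, σ ⟨i, j⟩⌋, fun i => ⟨?_, ?_, ?_⟩⟩
  · rw [Int.le_floor]
    simp only [capP, cp]
    push_cast
    rw [← Finset.sum_neg_distrib]
    exact Finset.sum_le_sum fun j _ => hσ1 _
  · have : (∑ j, σ ⟨i, j⟩) ≤ ((capP (fun f => x (Sum.inr f)) i : ℤ) : ℝ) := by
      simp only [capP, cp]
      push_cast
      exact Finset.sum_le_sum fun j _ => hσ2 _
    have h3 := (Int.floor_le (∑ j, σ ⟨i, j⟩)).trans this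
    exact_mod_cast h3
  · rw [← Int.floor_intCast_add]
    apply Int.floor_le_floor
    simp only [capM, cm]
    push_cast
    have h2i : (x (Sum.inl i) : ℝ) = _ := h2 i
    rw [h2i]
    have e1 := Finset.sum_le_sum fun j (_ : j ∈ Finset.univ) => hσ3 ⟨i, j⟩
    have e2 := Finset.sum_le_sum fun j (_ : j ∈ Finset.univ) => hσ4 ⟨i - 1, j⟩
    rw [Finset.sum_add_distrib] at e1
    rw [Finset.sum_sub_distrib] at e2
    linarith

theorem inCone_sum {t : ℕ} {x : (ZMod n ⊕ Σ i : ZMod n, Fin (a i)) → ℤ}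
    (h : InCone (t : ℝ) (fun k => (x k : ℝ))) : ∑ k, x k = t := by
  obtain ⟨u, v, -, -, h⟩ := h
  dsimp only at h
  exact_mod_cast h

theorem feas_inCone (ha : ∀ i, 1 ≤ a i) {t : ℕ} {x : (ZMod n ⊕ Σ i : ZMod n, Fin (a i)) → ℤ}
    (hsum : ∑ k, x k = t) {s : ZMod n → ℤ}
    (h : Feas (fun f => x (Sum.inr f)) (fun i => x (Sum.inl i)) s) :
    InCone (t : ℝ) (fun k => (x k : ℝ)) := by
  classical
  set y : (Σ i : ZMod n, Fin (a i)) → ℤ := fun f => x (Sum.inr f) with hy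
  let p : ZMod n → ℝ := fun i => x (Sum.inl i) - capM y i - capM y (i - 1) + s (i - 1) - s i
  have hp : ∀ i, 0 ≤ p i := by
    intro i
    have := (h i).2.2
    have h' : (s i : ℝ) ≤ (x (Sum.inl i) - capM y i - capM y (i - 1)) + s (i - 1) := by
      exact_mod_cast this
    simp only [p]
    linarith
  let σ : (Σ i : ZMod n, Fin (a i)) → ℝ := fun f => s f.1 / capP y f.1 * ((y f)⁺ : ℤ)
  have hσabs : ∀ f, |σ f| ≤ ((y f)⁺ : ℤ) := by
    intro f
    have h0 : (0 : ℝ) ≤ ((y f)⁺ : ℤ) := by exact_mod_cast posPart_nonneg (y f)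
    simp only [σ, abs_mul, abs_div]
    rw [abs_of_nonneg h0]
    apply mul_le_of_le_one_left h0
    apply div_le_one_of_le₀ _ (abs_nonneg _)
    have h1 : |s f.1| ≤ |capP y f.1| := (abs_le.2 ⟨(h f.1).1, (h f.1).2.1⟩).trans (le_abs_self _)
    exact_mod_cast h1
  have hσsum : ∀ i, ∑ j, σ ⟨i, j⟩ = s i := by
    intro i
    simp only [σ, ← Finset.mul_sum]
    have e : ∑ j, (((y ⟨i, j⟩)⁺ : ℤ) : ℝ) = (capP y i : ℝ) := by simp [capP, cp]
    rw [e]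
    by_cases hc : capP y i = 0
    · have := h i
      rw [hc] at this
      have : s i = 0 := by omega
      simp [this]
    · field_simp
  let u : (Σ i : ZMod n, Fin (a i)) → ℝ := fun f =>
    ((y f)⁻ : ℤ) + σ f + if f.2 = ⟨0, ha f.1⟩ then p f.1 else 0
  let v : (Σ i : ZMod n, Fin (a i)) → ℝ := fun f => ((y f)⁻ : ℤ) - σ f
  refine ⟨u, v, fun f => ?_, fun i => ?_, ?_⟩
  · have h1 := abs_le.1 (hσabs f)
    have h2 : (0 : ℝ) ≤ ((y f)⁻ : ℤ) := by exact_mod_cast negPart_nonneg (y f)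
    have h3 : (y f : ℝ) = ((y f)⁺ : ℤ) - ((y f)⁻ : ℤ) := by
      exact_mod_cast (posPart_sub_negPart (y f)).symm
    have h4 : 0 ≤ if f.2 = ⟨0, ha f.1⟩ then p f.1 else 0 := by
      split_ifs
      · exact hp _
      · exact le_rfl
    change _ ∧ 0 ≤ u f + (y f : ℝ) ∧ 0 ≤ v f + (y f : ℝ)
    rw [h3]
    simp only [u, v]
    refine ⟨?_, ?_, ?_⟩ <;> linarith
  · simp only [u, v, Finset.sum_add_distrib, Finset.sum_sub_distrib, hσsum]
    have e : ∑ j : Fin (a i), (if j = ⟨0, ha i⟩ then p i else 0) = p i := by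
      rw [Finset.sum_ite_eq']
      simp
    rw [e]
    simp only [p, capM, cm]
    push_cast
    ring
  · dsimp only
    exact_mod_cast hsum

/-- The parametrization of lattice points. -/
def Phi (d : Σ _ : (∀ i : ZMod n, (Fin (a i) → ℤ) × ℕ), ZMod n → ℤ) :
    (ZMod n ⊕ Σ i : ZMod n, Fin (a i)) → ℤ :=
  Sum.elim (fun i => (d.1 i).2 + d.2 i - d.2 (i - 1) + cm (d.1 i).1 + cm (d.1 (i - 1)).1)
    (fun f => (d.1 f.1).1 f.2)

open Classical in
noncomputable def S1 (x : ∀ i : ZMod n, (Fin (a i) → ℤ) × ℕ) : Finset (ZMod n → ℤ) :=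
  Fintype.piFinset (fun i => if (x i).2 = 0 then Finset.Icc (-cp (x i).1) (cp (x i).1)
    else {cp (x i).1})

open Classical in
noncomputable def S0 (x : ∀ i : ZMod n, (Fin (a i) → ℤ) × ℕ) : Finset (ZMod n → ℤ) :=
  Fintype.piFinset (fun i => if (x i).2 = 0 then Finset.Ico (-cp (x i).1) (cp (x i).1)
    else ∅)

theorem cp_nonneg {m : ℕ} (y : Fin m → ℤ) : 0 ≤ cp y :=
  Finset.sum_nonneg fun _ _ => posPart_nonneg _

open Classical in
theorem mem_S (x : ∀ i : ZMod n, (Fin (a i) → ℤ) × ℕ) (s : ZMod n → ℤ) :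
    s ∈ S1 x \ S0 x ↔ (∀ i, -cp (x i).1 ≤ s i ∧ s i ≤ cp (x i).1 ∧
      ((x i).2 = 0 ∨ s i = cp (x i).1)) ∧ ∃ i, s i = cp (x i).1 := by
  simp only [Finset.mem_sdiff, S1, S0, Fintype.mem_piFinset]
  have e1 : ∀ i, (s i ∈ (if (x i).2 = 0 then Finset.Icc (-cp (x i).1) (cp (x i).1)
    else {cp (x i).1})) ↔ -cp (x i).1 ≤ s i ∧ s i ≤ cp (x i).1 ∧
      ((x i).2 = 0 ∨ s i = cp (x i).1) := by
    intro i
    have := cp_nonneg (x i).1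
    split_ifs with h
    · simp [h]
    · simp only [Finset.mem_singleton, h, false_or]
      omega
  have e0 : ∀ i, (s i ∈ (if (x i).2 = 0 then Finset.Ico (-cp (x i).1) (cp (x i).1)
    else ∅)) ↔ -cp (x i).1 ≤ s i ∧ s i < cp (x i).1 ∧ (x i).2 = 0 := by
    intro i
    split_ifs with h
    · simp [h]
    · simp [h]
  simp only [e1, e0]
  refine and_congr_right fun h => ?_
  constructor
  · intro h0
    by_contra! hc
    apply h0
    intro i
    have := h i
    have := hc i
    omega
  · rintro ⟨i, hi⟩ h0
    have := h0 i
    omega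

open Classical in
theorem card_S (x : ∀ i : ZMod n, (Fin (a i) → ℤ) × ℕ) :
    ((S1 x \ S0 x).card : ℚ) =
      ∏ i, (2 * (cp (x i).1 : ℚ) * (if (x i).2 = 0 then 1 else 0) + 1) -
      ∏ i, (2 * (cp (x i).1 : ℚ) * (if (x i).2 = 0 then 1 else 0)) := by
  have hsub : S0 x ⊆ S1 x := by
    apply Fintype.piFinset_subset
    intro i
    split_ifs
    · exact Finset.Ico_subset_Icc_self
    · simp
  rw [Finset.cast_card_sdiff hsub, S1, S0, Fintype.card_piFinset, Fintype.card_piFinset]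
  push_cast
  congr 1
  · refine Finset.prod_congr rfl fun i _ => ?_
    have := cp_nonneg (x i).1
    split_ifs
    · rw [Int.card_Icc]
      have : ((cp (x i).1 + 1 - -cp (x i).1).toNat : ℤ) = 2 * cp (x i).1 + 1 := by omega
      rw [mul_one]
      exact_mod_cast this
    · simp
  · refine Finset.prod_congr rfl fun i _ => ?_
    have := cp_nonneg (x i).1
    split_ifs
    · rw [Int.card_Ico]
      have : ((cp (x i).1 - -cp (x i).1).toNat : ℤ) = 2 * cp (x i).1 := by omega
      rw [mul_one]
      exact_mod_cast this
    · simp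

noncomputable def totG (a : ZMod n → ℕ) : Graded (∀ i : ZMod n, (Fin (a i) → ℤ) × ℕ) :=
  Graded.pi fun i => locG (a i)

theorem totG_w (x : ∀ i : ZMod n, (Fin (a i) → ℤ) × ℕ) :
    ((totG a).w x : ℤ) = ∑ i, (cp (x i).1 + cm (x i).1 + (x i).2) := by
  simp only [totG, Graded.pi, locG, Graded.prod, Graded.int, Graded.nat, cp, cm]
  push_cast
  refine Finset.sum_congr rfl fun i _ => ?_
  rw [← Finset.sum_add_distrib]
  simp [posPart_add_negPart]

theorem Phi_sum (d : Σ _ : (∀ i : ZMod n, (Fin (a i) → ℤ) × ℕ), ZMod n → ℤ) :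
    ∑ k, Phi d k = (totG a).w d.1 := by
  rw [totG_w, Fintype.sum_sum_type]
  simp only [Phi, Sum.elim_inl, Sum.elim_inr, Fintype.sum_sigma]
  have e1 : ∑ i, d.2 (i - 1) = ∑ i, d.2 i := (Equiv.subRight (1 : ZMod n)).sum_comp d.2
  have e2 : ∑ i, cm (d.1 (i - 1)).1 = ∑ i, cm (d.1 i).1 :=
    (Equiv.subRight (1 : ZMod n)).sum_comp (fun i => cm (d.1 i).1)
  have e3 : ∀ i, ∑ j, (d.1 i).1 j = cp (d.1 i).1 - cm (d.1 i).1 := by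
    intro i
    simp [cp, cm, ← Finset.sum_sub_distrib, posPart_sub_negPart]
  simp only [e3, Finset.sum_add_distrib, Finset.sum_sub_distrib, e1, e2]
  ring

theorem Phi_injOn (d d' : Σ _ : (∀ i : ZMod n, (Fin (a i) → ℤ) × ℕ), ZMod n → ℤ)
    (hd : d.2 ∈ S1 d.1 \ S0 d.1) (hd' : d'.2 ∈ S1 d'.1 \ S0 d'.1) (h : Phi d = Phi d') :
    d = d' := by
  classical
  obtain ⟨x, s⟩ := d
  obtain ⟨x', s'⟩ := d'
  simp only at hd hd'
  rw [mem_S] at hd hd'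
  have hy : ∀ i, (x i).1 = (x' i).1 := by
    intro i
    ext j
    exact congrFun h (Sum.inr ⟨i, j⟩)
  have hz : ∀ i, ((x i).2 : ℤ) + s i - s (i - 1) = (x' i).2 + s' i - s' (i - 1) := by
    intro i
    have := congrFun h (Sum.inl i)
    simp only [Phi, Sum.elim_inl, hy] at this
    linarith
  simp only [hy] at hd
  have hs : s = s' := by
    funext i
    apply le_antisymm
    · refine flow_max_le n (fun i => cp (x' i).1)
        (fun i => ((x' i).2 : ℤ) + s' i - s' (i - 1)) s' s ?_ hd'.2 ?_ i
      · intro i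
        have := hd'.1 i
        omega
      · intro i
        have := hd.1 i
        have := hz i
        omega
    · refine flow_max_le n (fun i => cp (x' i).1)
        (fun i => ((x i).2 : ℤ) + s i - s (i - 1)) s s' ?_ hd.2 ?_ i
      · intro i
        have := hd.1 i
        omega
      · intro i
        have := hd'.1 i
        have := hz i
        omega
  subst hs
  have : x = x' := by
    funext i
    refine Prod.ext (hy i) ?_
    have := hz i
    omega
  rw [this]

open Classical in
theorem count_eq (hn : 3 ≤ n) (ha : ∀ i, 1 ≤ a i) (t : ℕ) (ht : t ≠ 0) :
    (latticePointCount (cosmoPolytope (multicycleEnds n a)) t : ℚ) =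
      ∑ x ∈ (totG a).fib t, ((S1 x \ S0 x).card : ℚ) := by
  have himg : { x : (ZMod n ⊕ Σ i : ZMod n, Fin (a i)) → ℤ |
      (fun k => (x k : ℝ)) ∈ (t : ℝ) • cosmoPolytope (multicycleEnds n a) } =
      Phi '' (((totG a).fib t).sigma (fun x => S1 x \ S0 x) : Finset _) := by
    ext x
    simp only [Set.mem_ofPred_eq, mem_smul_iff t ht, Set.mem_image, Finset.mem_coe,
      Finset.mem_sigma, Graded.mem_fib]
    constructor
    · intro h
      have hsum := inCone_sum h
      obtain ⟨s, hs, htight, hex⟩ := flow_max_exists n (by omega) _ _ (inCone_feas h)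
      set y : (Σ i : ZMod n, Fin (a i)) → ℤ := fun f => x (Sum.inr f) with hy
      let p : ZMod n → ℤ := fun i =>
        x (Sum.inl i) - capM y i - capM y (i - 1) + s (i - 1) - s i
      have hp : ∀ i, ((p i).toNat : ℤ) = p i := by
        intro i
        have := (hs i).2.2
        simp only [p]
        dsimp only at this
        omega
      let d : Σ _ : (∀ i : ZMod n, (Fin (a i) → ℤ) × ℕ), ZMod n → ℤ :=
        ⟨fun i => (fun j => y ⟨i, j⟩, (p i).toNat), s⟩
      have hPhi : Phi d = x := by
        ext k
        rcases k with i | f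
        · simp only [Phi, Sum.elim_inl, d, hp]
          simp only [p, capM]
          ring
        · simp [Phi, d, hy]
      refine ⟨d, ⟨?_, ?_⟩, hPhi⟩
      · have := Phi_sum d
        rw [hPhi, hsum] at this
        exact_mod_cast this.symm
      · rw [mem_S]
        refine ⟨fun i => ⟨(hs i).1, (hs i).2.1, ?_⟩, hex⟩
        have h1 := htight i
        dsimp only at h1
        have h2 := hp i
        simp only [d]
        rcases h1 with h1 | h1
        · left
          simp only [p] at h2 ⊢
          omega
        · right
          exact h1
    · rintro ⟨d, ⟨hw, hS⟩, rfl⟩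
      rw [mem_S] at hS
      refine feas_inCone ha (s := d.2) ?_ ?_
      · rw [Phi_sum, hw]
      · intro i
        have h1 := hS.1 i
        refine ⟨h1.1, h1.2.1, ?_⟩
        simp only [Phi, Sum.elim_inl, Sum.elim_inr, capM]
        have : (0 : ℤ) ≤ (d.1 i).2 := by positivity
        linarith
  rw [latticePointCount, himg, Set.ncard_image_of_injOn, Set.ncard_coe_finset, Finset.card_sigma]
  · push_cast
    rfl
  · intro d hd d' hd' h
    rw [Finset.mem_coe, Finset.mem_sigma] at hd hd'
    exact Phi_injOn d d' hd.2 hd'.2 h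

noncomputable def gB (m : ℕ) : PowerSeries ℚ :=
  (locG m).gf (fun x => (2 * (cp x.1 : ℚ)) * (if x.2 = 0 then 1 else 0))

noncomputable def gC (m : ℕ) : PowerSeries ℚ := (locG m).gf (fun _ => 1)

theorem gB_const (m : ℕ) : PowerSeries.constantCoeff (gB m) = 0 := by
  have := congrArg PowerSeries.constantCoeff (locG_B m)
  simpa [gB] using this

theorem gC_const (m : ℕ) : PowerSeries.constantCoeff (gC m) = 1 := by
  have := congrArg PowerSeries.constantCoeff (locG_one m)
  simpa [gC] using this

theorem ehrhart_eq (hn : 3 ≤ n) (ha : ∀ i, 1 ≤ a i) :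
    ehrhartSeries (cosmoPolytope (multicycleEnds n a)) =
      ∏ i, (gB (a i) + gC (a i)) - ∏ i, gB (a i) := by
  classical
  ext t
  rw [ehrhartSeries, PowerSeries.coeff_mk]
  split_ifs with ht
  · subst ht
    have : n ≠ 0 := by omega
    simp [map_prod, gB_const, gC_const, this]
  · rw [count_eq hn ha t ht]
    simp only [card_S]
    have e1 : ∏ i, (gB (a i) + gC (a i)) = (totG a).gf
        (fun x => ∏ i, (2 * (cp (x i).1 : ℚ) * (if (x i).2 = 0 then 1 else 0) + 1)) := by
      rw [totG, Graded.gf_pi (fun i => locG (a i))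
        (fun i x => 2 * (cp x.1 : ℚ) * (if x.2 = 0 then 1 else 0) + 1)]
      refine Finset.prod_congr rfl fun i _ => ?_
      rw [Graded.gf_add]
      rfl
    have e2 : ∏ i, gB (a i) = (totG a).gf
        (fun x => ∏ i, (2 * (cp (x i).1 : ℚ) * (if (x i).2 = 0 then 1 else 0))) := by
      rw [totG, Graded.gf_pi (fun i => locG (a i))
        (fun i x => 2 * (cp x.1 : ℚ) * (if x.2 = 0 then 1 else 0))]
      rfl
    rw [e1, e2, ← Graded.gf_sub, Graded.gf, PowerSeries.coeff_mk]

end lattice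

/-- Let `n ≥ 3` and `a = (a_1, …, a_n)` with all `a_i ≥ 1`.  The normalized
volume of the cosmological polytope of the multicycle `C_a` is
`Vol(C_{C_a}) = h*(C_{C_a}; 1) = ∏_i (1 + a_i) 2^{a_i} − ∏_i a_i 2^{a_i}`. -/
theorem normalized_volume_multicycle (n : ℕ) [NeZero n] (hn : 3 ≤ n)
    (a : ZMod n → ℕ) (ha : ∀ i, 1 ≤ a i)
    (h : Polynomial ℚ)
    (hh : IsHStarPoly (cosmoPolytope (multicycleEnds n a))
      (Fintype.card (ZMod n) + Fintype.card (Σ i : ZMod n, Fin (a i)) - 1) h) :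
    h.eval 1 =
      (∏ i : ZMod n, (1 + (a i : ℚ)) * 2 ^ (a i)) -
        ∏ i : ZMod n, (a i : ℚ) * 2 ^ (a i) := by
  have hpow : ((1 : PowerSeries ℚ) - PowerSeries.X) ^
      (Fintype.card (ZMod n) + Fintype.card (Σ i : ZMod n, Fin (a i)) - 1 + 1) =
      ∏ i : ZMod n, (1 - PowerSeries.X) ^ (a i + 1) := by
    rw [Finset.prod_pow_eq_pow_sum, Nat.sub_add_cancel]
    · simp [Finset.sum_add_distrib, add_comm]
    · have := Fintype.card_pos (α := ZMod n)
      omega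
  rw [IsHStarPoly, ehrhart_eq hn ha, hpow, sub_mul, ← Finset.prod_mul_distrib,
    ← Finset.prod_mul_distrib] at hh
  let q : Polynomial ℚ :=
    ∏ i : ZMod n, ((a i : Polynomial ℚ) * (1 + X) ^ (a i - 1) * (2 * X) + (1 + X) ^ (a i)) -
      ∏ i : ZMod n, ((a i : Polynomial ℚ) * (1 + X) ^ (a i - 1) * (2 * X))
  have hq : (h : PowerSeries ℚ) = (q : PowerSeries ℚ) := by
    rw [← hh]
    have c1 : ∀ p : Polynomial ℚ, (p : PowerSeries ℚ) = Polynomial.coeToPowerSeries.ringHom p :=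
      fun _ => rfl
    have cX : Polynomial.coeToPowerSeries.ringHom (X : Polynomial ℚ) = PowerSeries.X :=
      Polynomial.coe_X
    rw [c1]
    simp only [q, map_sub, map_prod, map_add, map_mul, map_pow, map_one, map_natCast,
      map_ofNat, cX]
    congr 1
    · refine Finset.prod_congr rfl fun i _ => ?_
      rw [add_mul, gB, gC, locG_B, locG_one]
    · refine Finset.prod_congr rfl fun i _ => ?_
      rw [gB, locG_B]
  have hq' : h = q := Polynomial.coe_injective ℚ hq
  rw [hq']
  simp only [q, eval_sub, eval_prod, eval_add, eval_mul, eval_pow, eval_one, eval_X,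
    eval_natCast, eval_ofNat]
  have hpow2 : ∀ i, (2 : ℚ) ^ (a i) = (1 + 1) ^ (a i - 1) * 2 := by
    intro i
    have := ha i
    obtain ⟨k, hk⟩ : ∃ k, a i = k + 1 := ⟨a i - 1, by omega⟩
    rw [hk, Nat.add_sub_cancel, pow_succ]
    norm_num
  congr 1
  · refine Finset.prod_congr rfl fun i _ => ?_
    rw [show ((1 : ℚ) + 1) ^ a i = 2 ^ a i by norm_num, hpow2]
    ring
  · refine Finset.prod_congr rfl fun i _ => ?_
    rw [hpow2]
    ring
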